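/- Let π be a set of primes, G a group, and G_0 a subgroup of G of finite index. Let A be a ℤG-module which, regarded as a ℤG_0-module by restriction, is a ℤG_0-module quotient of some ℤG_0-module whose underlying abelian group is torsion-free, of finite rank, and π-spectral. Then A is also a ℤG-module quotient of some ℤG-module whose underlying abelian group is torsion-free, of finite rank, and π-spectral. -/

import Mathlib

/-!
Statement 19: Lemma 4.1 of the paper, on promoting quotient presentations from
a finite-index subgroup to the whole group.
-/

open CategoryTheory

noncomputable section




/-- The rational circle `ℚ/ℤ`. -/
abbrev RatCircle : Type := ℚ ⧸ AddSubgroup.zmultiples (1 : ℚ)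

/-- The quasicyclic (Prüfer) `p`-group, realized as the `p`-primary part of `ℚ/ℤ`. -/
def pruferSubgroup (p : ℕ) : AddSubgroup RatCircle where
  carrier := {x | ∃ n : ℕ, (p ^ n : ℕ) • x = 0}
  zero_mem' := ⟨0, smul_zero _⟩
  add_mem' := by
    rintro a b ⟨m, hm⟩ ⟨n, hn⟩
    refine ⟨m + n, ?_⟩
    have ha : (p ^ m * p ^ n) • a = 0 := by rw [mul_comm, mul_smul, hm, smul_zero]
    have hb : (p ^ m * p ^ n) • b = 0 := by rw [mul_smul, hn, smul_zero]
    rw [smul_add, pow_add, ha, hb, add_zero]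
  neg_mem' := by
    rintro a ⟨m, hm⟩
    exact ⟨m, by rw [smul_neg, hm, neg_zero]⟩

/-- A group has a quasicyclic `p`-section if some quotient of a subgroup is
isomorphic to the Prüfer `p`-group. -/
def HasQuasicyclicSection (G : Type*) [Group G] (p : ℕ) : Prop :=
  ∃ (H : Subgroup G) (K : Subgroup H) (_ : K.Normal),
    Nonempty ((H ⧸ K) ≃* Multiplicative (pruferSubgroup p))

/-- The spectrum of a group: the set of primes `p` such that the group has a
section isomorphic to the quasicyclic `p`-group. -/
def groupSpectrum (G : Type*) [Group G] : Set ℕ :=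
  {p | p.Prime ∧ HasQuasicyclicSection G p}

/-- The spectrum of an (additive) abelian group, via `Multiplicative`. -/
abbrev addSpectrum (A : Type*) [AddGroup A] : Set ℕ :=
  groupSpectrum (Multiplicative A)

/-- An abelian group has finite rank if its torsion-free rank and all of its
`p`-ranks are finite. -/
def FiniteRankAbelian (A : Type*) [AddCommGroup A] : Prop :=
  (∃ n : ℕ, ∀ k : ℕ, (∃ f : (Fin k →₀ ℤ) →+ A, Function.Injective f) → k ≤ n) ∧
  ∀ p : ℕ, p.Prime → {a : A | (p : ℕ) • a = 0}.Finite

/-- A group has finite rank (in the sense appropriate for abelian groups: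
finite torsion-free rank and finite `p`-ranks). -/
def FiniteRankGroup (G : Type*) [Group G] : Prop :=
  (∃ n : ℕ, ∀ k : ℕ,
    (∃ f : Multiplicative (Fin k →₀ ℤ) →* G, Function.Injective f) → k ≤ n) ∧
  ∀ p : ℕ, p.Prime → {g : G | g ^ p = 1}.Finite

/-- A solvable group of finite rank: a solvable group all of whose abelian
sections have finite rank. -/
def SolvableOfFiniteRank (G : Type*) [Group G] : Prop :=
  IsSolvable G ∧
    ∀ (H : Subgroup G) (K : Subgroup H) (_ : K.Normal),
      (∀ x y : H ⧸ K, x * y = y * x) → FiniteRankGroup (H ⧸ K)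

/-- A group is virtually abelian. -/
def VirtuallyAbelian (G : Type*) [Group G] : Prop :=
  ∃ H : Subgroup G, H.index ≠ 0 ∧ ∀ x y : H, x * y = y * x

/-- A `ℤG`-module (given as an object of `Rep ℤ G`) whose underlying abelian group
is torsion-free, of finite rank, and `π`-spectral. -/
def NiceRep {G : Type} [Group G] (π : Set ℕ) (M : Rep.{0} ℤ G) : Prop :=
  (∀ m : M, m ≠ 0 → ¬IsOfFinAddOrder m) ∧ FiniteRankAbelian M ∧ addSpectrum M ⊆ π

/-- The class `𝒰` of solvable groups of finite rank. -/
def MemClassU (G : Type) [Group G] : Prop :=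
  SolvableOfFiniteRank G ∧
  ∃ (N : Subgroup G) (_ : N.Normal),
    Group.IsNilpotent N ∧
    Group.FG (G ⧸ N) ∧ VirtuallyAbelian (G ⧸ N) ∧
    ∃ (r : ℕ) (T : Fin (r + 1) → Subgroup G),
      Monotone T ∧ T 0 = ⊥ ∧
      ((T (Fin.last r) : Set G) = {g : G | g ∈ N ∧ IsOfFinOrder g}) ∧
      (∀ (i : Fin (r + 1)) (g t : G), t ∈ T i → g * t * g⁻¹ ∈ T i) ∧
      (∀ (i : Fin r) (n t : G), n ∈ N → t ∈ T i.succ →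
        n * t * n⁻¹ * t⁻¹ ∈ T i.castSucc) ∧
      (∀ i : Fin r, (T i.castSucc).relIndex (T i.succ) = 0 →
        ∃ M : Rep.{0} ℤ (G ⧸ N), NiceRep (groupSpectrum G) M ∧
          ∃ φ : M → G,
            (∀ m : M, φ m ∈ T i.succ) ∧
            (∀ m m' : M, (φ (m + m'))⁻¹ * (φ m * φ m') ∈ T i.castSucc) ∧
            (∀ t : G, t ∈ T i.succ → ∃ m : M, (φ m)⁻¹ * t ∈ T i.castSucc) ∧
            (∀ (g : G) (m : M),
              (φ (M.ρ (QuotientGroup.mk g) m))⁻¹ * (g * φ m * g⁻¹) ∈ T i.castSucc))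

/-!
If `M₀` maps onto the restriction of `A`, then the adjoint map `Ind M₀ ⟶ A` is onto as well, because
it already is on `1 ⊗ M₀`. As the index is finite, `Ind M₀` is isomorphic to the coinduced module,
whose elements are determined by their values on coset representatives; so its additive group embeds
in a finite power of `M₀`. Torsion-freeness and finiteness of rank pass to finite powers and to
subgroups. So does being `π`-spectral, because the spectrum of an extension lies in the union of the
spectra of the two factors: proper subgroups of a Prüfer group have bounded exponent, so a
homomorphism onto it is either onto on the kernel or, after multiplication by a power of `p`,
factors through the quotient.
-/

section RationalCircle

theorem mem_zmultiples_of_addOrderOf_nsmul_eq_zero {A : Type*} [AddCommGroup A]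
    [IsAddTorsionFree A] {a : A} {s x : AddCircle a} (hs : IsOfFinAddOrder s)
    (hx : addOrderOf s • x = 0) : x ∈ AddSubgroup.zmultiples s := by
  have hn : addOrderOf s ≠ 0 := hs.addOrderOf_pos.ne'
  have hreg : IsSMulRegular A (addOrderOf s) := nsmul_right_injective hn
  have hsub : (AddSubgroup.zmultiples s : Set (AddCircle a)) ⊆ {y | addOrderOf s • y = 0} := by
    rintro _ ⟨k, rfl⟩
    simp [smul_comm _ k, addOrderOf_nsmul_eq_zero]
  have : Finite (AddSubgroup.zmultiples s) := hs.finite_zmultiples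
  have hcard : (AddSubgroup.zmultiples s : Set (AddCircle a)).encard = addOrderOf s := by
    rw [← Set.Finite.cast_ncard_eq (Set.toFinite _), ← Nat.card_coe_set_eq]
    exact congrArg _ (Nat.card_zmultiples s)
  have heq := (Set.toFinite _).eq_of_subset_of_encard_le hsub
    ((AddCircle.card_torsion_le_of_isSMulRegular a _ hn hreg).trans_eq hcard.symm)
  exact heq.symm.subset hx

variable {p : ℕ}

theorem nontrivial_pruferSubgroup (hp : 1 < p) : Nontrivial (pruferSubgroup p) := by
  let x : AddCircle (1 : ℚ) := ((1 / p : ℚ) : AddCircle (1 : ℚ))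
  have hx : addOrderOf x = p := AddCircle.addOrderOf_period_div (zero_lt_one.trans hp)
  refine nontrivial_of_ne ⟨x, 1, ?_⟩ 0 fun h => ?_
  · simpa [hx] using addOrderOf_nsmul_eq_zero x
  · have hx0 : x = 0 := congrArg Subtype.val h
    exact hp.ne (by rw [← hx, hx0, addOrderOf_zero])

theorem pruferSubgroup_pow_nsmul_surjective (hp : p ≠ 0) (n : ℕ) :
    Function.Surjective fun x : pruferSubgroup p => p ^ n • x := by
  rintro ⟨x, m, hx⟩
  obtain ⟨y, rfl⟩ := DivisibleBy.surjective_smul (AddCircle (1 : ℚ)) ℤ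
    (Int.natCast_ne_zero.2 (pow_ne_zero n hp)) x
  simp only [natCast_zsmul] at hx ⊢
  exact ⟨⟨y, m + n, by rw [pow_add, mul_smul, hx]⟩, rfl⟩

theorem pruferSubgroup_eq_top_or_exists_pow_nsmul_eq_zero (hp : p.Prime)
    (S : AddSubgroup (pruferSubgroup p)) :
    S = ⊤ ∨ ∃ n : ℕ, ∀ s ∈ S, p ^ n • s = 0 := by
  have := Fact.mk hp
  by_contra! ⟨hS, hunbdd⟩
  refine hS (eq_top_iff.2 ?_)
  rintro ⟨x, n, hx⟩ -
  obtain ⟨⟨s, hs⟩, hsS, hsn⟩ := hunbdd n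
  obtain ⟨k, hk⟩ := exists_addOrderOf_eq_prime_pow_iff.2 hs
  have hnk : n ≤ k := by
    by_contra! hkn
    exact hsn (Subtype.ext (addOrderOf_dvd_iff_nsmul_eq_zero.1 (hk ▸ pow_dvd_pow p hkn.le)))
  have hkx : addOrderOf s • x = 0 := by
    rw [hk, ← Nat.sub_add_cancel hnk, pow_add, mul_smul, hx, smul_zero]
  have hs_fin : IsOfFinAddOrder s := addOrderOf_pos_iff.1 (hk ▸ pow_pos hp.pos k)
  obtain ⟨m, hm⟩ := mem_zmultiples_of_addOrderOf_nsmul_eq_zero hs_fin hkx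
  have hmx : m • (⟨s, hs⟩ : pruferSubgroup p) = ⟨x, n, hx⟩ := Subtype.ext hm
  exact hmx ▸ S.zsmul_mem hsS m

end RationalCircle

section Spectrum

variable {G Q : Type*} [Group G] [Group Q] {p : ℕ}

theorem HasQuasicyclicSection.of_injective_of_surjective {H : Type*} [Group H] (i : H →* G)
    (hi : Function.Injective i) (F : H →* Multiplicative (pruferSubgroup p))
    (hF : Function.Surjective F) : HasQuasicyclicSection G p := by
  let e : H ≃* i.range := i.ofInjective hi
  let F' : i.range →* Multiplicative (pruferSubgroup p) := F.comp e.symm.toMonoidHom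
  exact ⟨i.range, F'.ker, inferInstance,
    ⟨QuotientGroup.quotientKerEquivOfSurjective F' (hF.comp e.symm.surjective)⟩⟩

theorem HasQuasicyclicSection.exists_surjective (h : HasQuasicyclicSection G p) :
    ∃ (H : Subgroup G) (F : H →* Multiplicative (pruferSubgroup p)), Function.Surjective F := by
  obtain ⟨H, K, _, ⟨e⟩⟩ := h
  exact ⟨H, e.toMonoidHom.comp (QuotientGroup.mk' K),
    e.surjective.comp (QuotientGroup.mk'_surjective K)⟩

theorem HasQuasicyclicSection.map_injective (h : HasQuasicyclicSection G p) (f : G →* Q)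
    (hf : Function.Injective f) : HasQuasicyclicSection Q p := by
  obtain ⟨H, F, hF⟩ := h.exists_surjective
  exact .of_injective_of_surjective (f.comp H.subtype) (hf.comp H.subtype_injective) F hF

theorem not_hasQuasicyclicSection_of_subsingleton [Subsingleton G] (hp : 1 < p) :
    ¬HasQuasicyclicSection G p := by
  intro h
  obtain ⟨H, F, hF⟩ := h.exists_surjective
  have := nontrivial_pruferSubgroup hp
  exact not_subsingleton _ hF.subsingleton

theorem HasQuasicyclicSection.ker_or_codomain (hp : p.Prime) (h : HasQuasicyclicSection G p)
    (f : G →* Q) : HasQuasicyclicSection f.ker p ∨ HasQuasicyclicSection Q p := by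
  obtain ⟨H, F, hF⟩ := h.exists_surjective
  let fH : H →* Q := f.comp H.subtype
  -- If `F` is not onto on the kernel, some `p ^ n` kills the image of the kernel, so `p ^ n • F`
  -- factors through the image of `H` in `Q`; it is still onto as the Prüfer group is divisible.
  obtain htop | ⟨n, hn⟩ :=
    pruferSubgroup_eq_top_or_exists_pow_nsmul_eq_zero hp (fH.ker.map F).toAddSubgroup'
  · left
    let i : fH.ker →* f.ker := (H.subtype.comp fH.ker.subtype).codRestrict f.ker fun x => x.2
    have hi : Function.Injective i := fun x y hxy => by
      have hxy' : (i x : G) = i y := congrArg Subtype.val hxy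
      exact Subtype.ext (Subtype.ext hxy')
    refine .of_injective_of_surjective i hi (F.comp fH.ker.subtype) fun y => ?_
    obtain ⟨x, hx, rfl⟩ : y.toAdd ∈ (fH.ker.map F).toAddSubgroup' := htop ▸ AddSubgroup.mem_top _
    exact ⟨⟨x, hx⟩, rfl⟩
  · right
    let F' : H →* Multiplicative (pruferSubgroup p) := (powMonoidHom (p ^ n)).comp F
    have hF' : Function.Surjective F' := (pruferSubgroup_pow_nsmul_surjective hp.ne_zero n).comp hF
    have hker : fH.ker ≤ F'.ker := fun x hx => hn (F x) ⟨x, hx, rfl⟩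
    exact .of_injective_of_surjective (QuotientGroup.kerLift fH)
      (QuotientGroup.kerLift_injective fH) (QuotientGroup.lift fH.ker F' hker)
      (QuotientGroup.lift_surjective_of_surjective _ _ hF' hker)

theorem groupSpectrum_subset_of_injective (f : G →* Q) (hf : Function.Injective f) :
    groupSpectrum G ⊆ groupSpectrum Q :=
  fun _ ⟨hp, h⟩ => ⟨hp, h.map_injective f hf⟩

theorem groupSpectrum_eq_empty_of_subsingleton [Subsingleton G] : groupSpectrum G = ∅ :=
  Set.eq_empty_of_forall_notMem fun _ ⟨hp, h⟩ =>
    not_hasQuasicyclicSection_of_subsingleton hp.one_lt h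

theorem groupSpectrum_subset_ker_union (f : G →* Q) :
    groupSpectrum G ⊆ groupSpectrum f.ker ∪ groupSpectrum Q :=
  fun _ ⟨hp, h⟩ => (h.ker_or_codomain hp f).imp (⟨hp, ·⟩) (⟨hp, ·⟩)

theorem groupSpectrum_pi_subset {ι : Type*} [Finite ι] (N : ι → Type*) [∀ i, Group (N i)] :
    groupSpectrum (∀ i, N i) ⊆ ⋃ i, groupSpectrum (N i) := by
  induction ι using Finite.induction_empty_option with
  | of_equiv e ih =>
    let f : (∀ i, N i) →* ∀ i, N (e i) := MonoidHom.pi fun i => Pi.evalMonoidHom N (e i)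
    have hf : Function.Injective f := fun x y hxy =>
      funext fun i => e.apply_symm_apply i ▸ congrFun hxy (e.symm i)
    refine (groupSpectrum_subset_of_injective f hf).trans ((ih _).trans ?_)
    exact Set.iUnion_subset fun i => Set.subset_iUnion_of_subset (e i) subset_rfl
  | h_empty => simp [groupSpectrum_eq_empty_of_subsingleton]
  | h_option ih =>
    let f : (∀ i, N i) →* N none := Pi.evalMonoidHom N none
    let r : f.ker →* ∀ i, N (some i) :=
      (MonoidHom.pi fun i => Pi.evalMonoidHom N (some i)).comp f.ker.subtype
    have hr : Function.Injective r := fun x y hxy => Subtype.ext <| funext fun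
      | none => x.2.trans y.2.symm
      | some i => congrFun hxy i
    refine (groupSpectrum_subset_ker_union f).trans (Set.union_subset ?_ ?_)
    · refine (groupSpectrum_subset_of_injective r hr).trans ((ih _).trans ?_)
      exact Set.iUnion_subset fun i => Set.subset_iUnion_of_subset (some i) subset_rfl
    · exact Set.subset_iUnion_of_subset none subset_rfl

end Spectrum

section Rank

open scoped nonZeroDivisors

theorem rank_lt_aleph0_iff_finite_of_isLocalizedModule {R M N : Type*} (K : Type*) [CommRing R]
    [Field K] [Algebra R K] [IsFractionRing R K] [AddCommGroup M] [Module R M] [AddCommGroup N]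
    [Module R N] [Module K N] [IsScalarTower R K N] (f : M →ₗ[R] N) [IsLocalizedModule R⁰ f] :
    Module.rank R M < Cardinal.aleph0 ↔ Module.Finite K N := by
  rw [← Module.rank_lt_aleph0_iff, IsLocalization.rank_eq K R⁰ le_rfl,
    ← Cardinal.lift_lt_aleph0, ← IsLocalizedModule.lift_rank_eq R⁰ f le_rfl,
    Cardinal.lift_lt_aleph0]

theorem rank_pi_lt_aleph0 {R ι : Type*} [CommRing R] [IsDomain R] [Finite ι] {M : ι → Type*}
    [∀ i, AddCommGroup (M i)] [∀ i, Module R (M i)]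
    (h : ∀ i, Module.rank R (M i) < Cardinal.aleph0) :
    Module.rank R (∀ i, M i) < Cardinal.aleph0 := by
  let loc (i : ι) : M i →ₗ[R] LocalizedModule R⁰ (M i) := LocalizedModule.mkLinearMap R⁰ (M i)
  have hfin (i : ι) : Module.Finite (FractionRing R) (LocalizedModule R⁰ (M i)) :=
    (rank_lt_aleph0_iff_finite_of_isLocalizedModule _ (loc i)).1 (h i)
  exact (rank_lt_aleph0_iff_finite_of_isLocalizedModule (FractionRing R)
    (LinearMap.pi fun i => loc i ∘ₗ LinearMap.proj i)).2 inferInstance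

variable {A : Type*} [AddCommGroup A]

theorem rank_int_lt_aleph0_iff : Module.rank ℤ A < Cardinal.aleph0 ↔
    ∃ n : ℕ, ∀ k : ℕ, (∃ f : (Fin k →₀ ℤ) →+ A, Function.Injective f) → k ≤ n := by
  constructor
  · intro h
    obtain ⟨n, hn⟩ := Cardinal.lt_aleph0.mp h
    refine ⟨n, fun k ⟨f, hf⟩ => ?_⟩
    simpa [hn] using LinearMap.lift_rank_le_of_injective f.toIntLinearMap hf
  · rintro ⟨n, hn⟩
    refine (rank_le fun s hs => ?_).trans_lt (Cardinal.natCast_lt_aleph0 (n := n))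
    have hs' : LinearIndependent ℤ fun i => (s.equivFin.symm i : A) :=
      hs.comp _ s.equivFin.symm.injective
    exact hn _ ⟨(Finsupp.linearCombination ℤ _).toAddMonoidHom, hs'⟩

theorem finiteRankAbelian_iff_rank_lt_aleph0 [IsAddTorsionFree A] :
    FiniteRankAbelian A ↔ Module.rank ℤ A < Cardinal.aleph0 := by
  rw [FiniteRankAbelian, ← rank_int_lt_aleph0_iff, and_iff_left_iff_imp]
  intro _ p hp
  simp [hp.ne_zero]

end Rank

section NiceRep

variable {G : Type} [Group G] {π : Set ℕ}

theorem niceRep_iff (M : Rep.{0} ℤ G) :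
    NiceRep π M ↔
      IsAddTorsionFree M ∧ Module.rank ℤ M < Cardinal.aleph0 ∧ addSpectrum M ⊆ π := by
  rw [NiceRep, ← isAddTorsionFree_iff_not_isOfFinAddOrder]
  refine and_congr_right fun _ => and_congr_left fun _ => ?_
  exact finiteRankAbelian_iff_rank_lt_aleph0

theorem NiceRep.of_injective_pi {ι : Type*} [Finite ι] {H : Type} [Group H] {N : ι → Rep.{0} ℤ H}
    (hN : ∀ i, NiceRep π (N i)) {M : Rep.{0} ℤ G} (j : M →+ ∀ i, N i)
    (hj : Function.Injective j) : NiceRep π M := by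
  simp only [niceRep_iff] at hN ⊢
  have (i : ι) : IsAddTorsionFree (N i) := (hN i).1
  refine ⟨hj.isAddTorsionFree j, ?_, ?_⟩
  · have hlift := LinearMap.lift_rank_le_of_injective j.toIntLinearMap hj
    have hpi := rank_pi_lt_aleph0 fun i => (hN i).2.1
    exact Cardinal.lift_lt_aleph0.1 (hlift.trans_lt (Cardinal.lift_lt_aleph0.2 hpi))
  · let j' : Multiplicative M →* ∀ i, Multiplicative (N i) :=
      (MulEquiv.piMultiplicative _).toMonoidHom.comp j.toMultiplicative
    have hj' : Function.Injective j' := (MulEquiv.piMultiplicative _).injective.comp hj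
    calc addSpectrum M ⊆ groupSpectrum (∀ i, Multiplicative (N i)) :=
          groupSpectrum_subset_of_injective j' hj'
      _ ⊆ ⋃ i, addSpectrum (N i) := groupSpectrum_pi_subset _
      _ ⊆ π := Set.iUnion_subset fun i => (hN i).2.2

end NiceRep

section Induction

open scoped Pointwise

/-- Restriction of coinduced functions to a subset `T` of the group. -/
def coindRestrict {k G H V : Type*} [CommRing k] [Monoid G] [Monoid H] [AddCommGroup V]
    [Module k V] (f : G →* H) (ρ : Representation k G V) (T : Set H) :
    Representation.coindV f ρ →ₗ[k] (T → V) :=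
  LinearMap.funLeft k V ((↑) : T → H) ∘ₗ (Representation.coindV f ρ).subtype

theorem coindRestrict_injective {k G H V : Type*} [CommRing k] [Monoid G] [Monoid H]
    [AddCommGroup V] [Module k V] (f : G →* H) (ρ : Representation k G V) {T : Set H}
    (hT : Set.range f * T = Set.univ) : Function.Injective (coindRestrict f ρ T) := by
  intro c c' hcc'
  ext h
  obtain ⟨_, ⟨g, rfl⟩, t, ht, rfl⟩ := hT.superset (Set.mem_univ h)
  have hct : c.1 t = c'.1 t := congrFun hcc' ⟨t, ht⟩
  exact (c.2 g t).trans (hct ▸ (c'.2 g t).symm)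

universe u v w w'

theorem surjective_indResHomEquiv_symm {k : Type u} {G : Type v} {H : Type w} [CommRing k]
    [Group G] [Group H] (f : G →* H) {M : Rep.{max w' w u} k G} {A : Rep.{max w' w u} k H}
    (φ : M ⟶ Rep.res f A) (hφ : Function.Surjective φ.hom) :
    Function.Surjective ((Rep.indResHomEquiv f M A).symm φ).hom := by
  intro a
  obtain ⟨x, rfl⟩ := hφ a
  exact ⟨Representation.IndV.mk f M.ρ 1 x, by simp⟩

theorem exists_injective_ind_to_pi {k : Type u} {G : Type w} [CommRing k] [Group G]
    (S : Subgroup G) [S.FiniteIndex] (M : Rep.{max w u} k S) :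
    ∃ (T : Set G) (_ : Finite T) (j : Rep.ind S.subtype M →+ (T → M)), Function.Injective j := by
  classical
  obtain ⟨T, hT, -⟩ := S.exists_isComplement_right 1
  have hrestrict : Function.Injective (coindRestrict S.subtype M.ρ T) :=
    coindRestrict_injective S.subtype M.ρ (by simpa using hT.mul_eq)
  let e : Rep.ind S.subtype M ⟶ Rep.coind S.subtype M := (Rep.indCoindIso M).hom
  have he : Function.Injective e.hom := (Rep.mono_iff_injective e).1 inferInstance
  exact ⟨T, hT.finite_right,
    (coindRestrict S.subtype M.ρ T).toAddMonoidHom.comp e.hom.toLinearMap.toAddMonoidHom,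
    hrestrict.comp he⟩

theorem NiceRep.ind {π : Set ℕ} {G : Type} [Group G] {S : Subgroup G} [S.FiniteIndex]
    {M : Rep.{0} ℤ S} (hM : NiceRep π M) : NiceRep π (Rep.ind S.subtype M) := by
  obtain ⟨T, _, j, hj⟩ := exists_injective_ind_to_pi S M
  exact .of_injective_pi (fun _ => hM) j hj

end Induction

/-- Let `π` be a set of primes, `G` a group and `G₀` a subgroup of finite index.
Let `A` be a `ℤG`-module which, as a `ℤG₀`-module, is a quotient of a
`ℤG₀`-module whose underlying abelian group is torsion-free, of finite rank and
`π`-spectral.  Then `A` is a quotient of a `ℤG`-module whose underlying abelian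
group is torsion-free, of finite rank and `π`-spectral. -/
theorem quotient_of_nice_of_finite_index (π : Set ℕ) (G : Type) [Group G]
    (G₀ : Subgroup G) (hindex : G₀.index ≠ 0) (A : Rep.{0} ℤ G)
    (h₀ : ∃ (M₀ : Rep.{0} ℤ G₀) (φ : M₀ ⟶ (Rep.resFunctor G₀.subtype).obj A),
      NiceRep π M₀ ∧ Function.Surjective φ.hom) :
    ∃ (M : Rep.{0} ℤ G) (φ : M ⟶ A), NiceRep π M ∧ Function.Surjective φ.hom := by
  obtain ⟨M₀, φ, hM₀, hφ⟩ := h₀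
  have : G₀.FiniteIndex := ⟨hindex⟩
  exact ⟨Rep.ind G₀.subtype M₀, (Rep.indResHomEquiv G₀.subtype M₀ A).symm φ, hM₀.ind,
    surjective_indResHomEquiv_symm G₀.subtype φ hφ⟩

end
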